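/- arXiv:2209.00418 — 5 statements merged into one kernel-verified Lean document; each statement's English description precedes it below -/
import Mathlib

section
/- Let k ≥ 2 and let P and Q be Dyck words of size n such that, for some (possibly empty) words A and B, either P = A d^k u B and Q = A u d^k B, or P = A d u^k B and Q = A u^k d B. Then P ≤ Q in the Dyck lattice Dyck_n and the interval [P,Q] is linear of height k. -/
/-!
Common definitions.  A letter of a word is a `Bool`: `true` is an up step `u`,
`false` is a down step `d`.  Positions in words are 0-based.
-/

/-- A (possibly empty) Dyck word: as many `u`'s as `d`'s, and every
prefix has at least as many `u`'s as `d`'s. -/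
def IsDyckPath (w : List Bool) : Prop :=
  w.count true = w.count false ∧ ∀ p, p <+: w → p.count false ≤ p.count true

/-- A Dyck word of size `n`: `n` up steps, `n` down steps, every prefix has
at least as many `u`'s as `d`'s. -/
def IsDyckWord (n : ℕ) (w : List Bool) : Prop :=
  w.count true = n ∧ w.count false = n ∧ ∀ p, p <+: w → p.count false ≤ p.count true

/-- The set of Dyck words of size `n`. -/
def DyckSet (n : ℕ) : Set (List Bool) := {w | IsDyckWord n w}

/-- An increment function: a `{0,1}`-valued function (the paper's `δ : {1,…,n} → {0,1}`;
only the values on `{1,…,n}` are ever used). -/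
def IsIncFun (δ : ℕ → ℤ) : Prop := ∀ i, δ i = 0 ∨ δ i = 1

/-- The 0-based position in `w` of the `i`-th up step `u_i` (`i` is 1-based). -/
def upPos (w : List Bool) (i : ℕ) : ℕ :=
  ((List.range w.length).filter fun q => w.getD q false = true).getD (i - 1) 0

/-- `h_i(w)`: the (1-based, between 1 and 2n) position of the up step `u_i` in `w`. -/
def hpos (w : List Bool) (i : ℕ) : ℕ := upPos w i + 1

/-- The change of δ-altitude produced by the letter at position `q` of `w`:
the up step `u_i` contributes `δ i`, a down step contributes `-1`. -/
def stepVal (δ : ℕ → ℤ) (w : List Bool) (q : ℕ) : ℤ :=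
  if w.getD q false = true then δ ((w.take (q + 1)).count true) else -1

/-- The δ-elevation of the factor of `w` occupying positions `a, …, b-1`. -/
def elev (δ : ℕ → ℤ) (w : List Bool) (a b : ℕ) : ℤ :=
  ∑ q ∈ Finset.Ico a b, stepVal δ w q

/-- `C` is the δ-excursion of the up step of `w` at position `p`:
the smallest (nonempty) factor of `w` starting at `p` whose δ-elevation is `0`. -/
def IsDeltaExcAt (δ : ℕ → ℤ) (w : List Bool) (p : ℕ) (C : List Bool) : Prop :=
  w.getD p false = true ∧
  ∃ m, 0 < m ∧ p + m ≤ w.length ∧ C = (w.drop p).take m ∧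
    elev δ w p (p + m) = 0 ∧ ∀ m', 0 < m' → m' < m → elev δ w p (p + m') ≠ 0

/-- `C` is the excursion of the up step of `w` at position `p`: the smallest factor
of `w` starting at `p` that is itself a Dyck word. -/
def IsExcursionAt (w : List Bool) (p : ℕ) (C : List Bool) : Prop :=
  w.getD p false = true ∧
  ∃ m, 0 < m ∧ p + m ≤ w.length ∧ C = (w.drop p).take m ∧ IsDyckPath C ∧
    ∀ m', 0 < m' → m' < m → ¬ IsDyckPath ((w.drop p).take m')

/-- `ℓ_i(w; δ)`: the length of the δ-excursion of `u_i` in `w`. -/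
noncomputable def excLen (δ : ℕ → ℤ) (w : List Bool) (i : ℕ) : ℕ :=
  sInf {m | 0 < m ∧ elev δ w (upPos w i) (upPos w i + m) = 0}

/-- `Q` is the δ-rotation of `P` at some up step: `P = A d C B` with `d u_i` a valley
and `C` the δ-excursion of `u_i`, and `Q = A C d B`. -/
def DeltaRot (δ : ℕ → ℤ) (P Q : List Bool) : Prop :=
  ∃ A C B, P = A ++ false :: (C ++ B) ∧ Q = A ++ (C ++ false :: B) ∧
    IsDeltaExcAt δ P (A.length + 1) C

/-- The alt-Tamari order `Tam^δ`: reflexive transitive closure of δ-rotations. -/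
def altLE (δ : ℕ → ℤ) : List Bool → List Bool → Prop :=
  Relation.ReflTransGen (DeltaRot δ)

/-- The Tamari order: the alt-Tamari order for `δ ≡ 1` (the δ-excursion of any up step
is then its excursion). -/
def tamLE : List Bool → List Bool → Prop := altLE fun _ => 1

/-- The height (number of `u`'s minus number of `d`'s) of the length-`j` prefix of `w`. -/
def prefHeight (w : List Bool) (j : ℕ) : ℤ :=
  ((w.take j).count true : ℤ) - ((w.take j).count false : ℤ)

/-- The Dyck (inclusion) order: every prefix height of `P` is at most that of `Q`. -/
def dyckLE (P Q : List Bool) : Prop := ∀ j, prefHeight P j ≤ prefHeight Q j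

/-- Strict version of a relation `le`. -/
def ltOf (le : List Bool → List Bool → Prop) (P Q : List Bool) : Prop :=
  le P Q ∧ ¬ le Q P

/-- There is a strict chain `P = c 0 < c 1 < ⋯ < c k = Q` inside `S`. -/
def HasChainIn (S : Set (List Bool)) (le : List Bool → List Bool → Prop)
    (P Q : List Bool) (k : ℕ) : Prop :=
  ∃ c : ℕ → List Bool, c 0 = P ∧ c k = Q ∧ (∀ i ≤ k, c i ∈ S) ∧
    ∀ i < k, ltOf le (c i) (c (i + 1))

/-- The interval `[P,Q]` of the poset `(S, le)` has height `k`: `k` is the maximal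
length of a chain from `P` to `Q`. -/
def IntervalHeight (S : Set (List Bool)) (le : List Bool → List Bool → Prop)
    (P Q : List Bool) (k : ℕ) : Prop :=
  HasChainIn S le P Q k ∧ ∀ m, HasChainIn S le P Q m → m ≤ k

/-- The interval `[P,Q]` of the poset `(S, le)` is linear: it is totally ordered. -/
def LinearInterval (S : Set (List Bool)) (le : List Bool → List Bool → Prop)
    (P Q : List Bool) : Prop :=
  P ∈ S ∧ Q ∈ S ∧ le P Q ∧
  ∀ R R', R ∈ S → R' ∈ S → le P R → le R Q → le P R' → le R' Q → le R R' ∨ le R' R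

/-- `Q` covers `P` in the poset `(S, le)`. -/
def CovIn (S : Set (List Bool)) (le : List Bool → List Bool → Prop)
    (P Q : List Bool) : Prop :=
  P ∈ S ∧ Q ∈ S ∧ ltOf le P Q ∧ ∀ R ∈ S, ¬ (ltOf le P R ∧ ltOf le R Q)

/-- The number of valleys (factors `du`) of `w`. -/
def valleys (w : List Bool) : ℕ :=
  ((List.range w.length).filter fun q => !w.getD q true && w.getD (q + 1) false).length

theorem prefHeight_zero (w : List Bool) : prefHeight w 0 = 0 := by
  simp [prefHeight]

theorem prefHeight_nil (j : ℕ) : prefHeight [] j = 0 := by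
  simp [prefHeight]

theorem prefHeight_cons_succ (a : Bool) (w : List Bool) (j : ℕ) :
    prefHeight (a :: w) (j + 1) = (if a then 1 else -1) + prefHeight w j := by
  cases a <;> simp [prefHeight] <;> ring

theorem prefHeight_map_not (w : List Bool) (j : ℕ) :
    prefHeight (w.map not) j = -prefHeight w j := by
  induction w generalizing j with
  | nil => simp [prefHeight_nil]
  | cons a w ih =>
    cases j with
    | zero => simp [prefHeight_zero]
    | succ j => cases a <;> simp [prefHeight_cons_succ, ih] <;> ring

theorem neg_le_prefHeight (w : List Bool) (j : ℕ) : -(j : ℤ) ≤ prefHeight w j := by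
  have h₁ : (w.take j).count false ≤ (w.take j).length := List.count_le_length
  have h₂ : (w.take j).length ≤ j := by simp
  unfold prefHeight
  omega

theorem prefHeight_replicate_false_append_of_le {m j : ℕ} (h : j ≤ m) (w : List Bool) :
    prefHeight (List.replicate m false ++ w) j = -j := by
  simp [prefHeight, List.take_append_of_le_length, h, List.count_replicate]

theorem prefHeight_replicate_false_append (m t : ℕ) (w : List Bool) :
    prefHeight (List.replicate m false ++ w) (m + t) = -m + prefHeight w t := by
  induction m with
  | zero => simp
  | succ m ih =>
    rw [show m + 1 + t = m + t + 1 by omega, List.replicate_succ, List.cons_append,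
      prefHeight_cons_succ, ih]
    push_cast
    simp
    ring

theorem dyckLE_refl (P : List Bool) : dyckLE P P := fun _ => le_rfl

theorem dyckLE_trans {P Q R : List Bool} (h₁ : dyckLE P Q) (h₂ : dyckLE Q R) : dyckLE P R :=
  fun j => (h₁ j).trans (h₂ j)

theorem dyckLE_cons (a : Bool) (P Q : List Bool) : dyckLE (a :: P) (a :: Q) ↔ dyckLE P Q := by
  refine ⟨fun h j => ?_, fun h j => ?_⟩
  · simpa [prefHeight_cons_succ] using h (j + 1)
  · cases j with
    | zero => simp [prefHeight_zero]
    | succ j => simpa [prefHeight_cons_succ] using h j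

theorem dyckLE_append (A P Q : List Bool) : dyckLE (A ++ P) (A ++ Q) ↔ dyckLE P Q := by
  induction A with
  | nil => rfl
  | cons a A ih => rw [List.cons_append, List.cons_append, dyckLE_cons, ih]

theorem dyckLE_map_not {P Q : List Bool} (h : dyckLE P Q) : dyckLE (Q.map not) (P.map not) := by
  intro j
  simpa [prefHeight_map_not] using h j

/-- A word squeezed between two words with a common prefix starts with this prefix. -/
theorem exists_eq_append_of_dyckLE (A : List Bool) {X Y R : List Bool}
    (hlen : R.length = (A ++ X).length)
    (h₁ : dyckLE (A ++ X) R) (h₂ : dyckLE R (A ++ Y)) :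
    ∃ R', R = A ++ R' ∧ dyckLE X R' ∧ dyckLE R' Y := by
  induction A generalizing R with
  | nil => exact ⟨R, rfl, h₁, h₂⟩
  | cons a A ih =>
    cases R with
    | nil => simp at hlen
    | cons b R =>
      have e : b = a := by
        have e₁ := h₁ 1
        have e₂ := h₂ 1
        rw [List.cons_append, prefHeight_cons_succ, prefHeight_cons_succ] at e₁ e₂
        simp only [prefHeight_zero] at e₁ e₂
        cases a <;> cases b <;> simp at e₁ e₂ ⊢
      subst e
      rw [List.cons_append, dyckLE_cons] at h₁ h₂
      obtain ⟨R', rfl, h⟩ := ih (by simpa using hlen) h₁ h₂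
      exact ⟨R', rfl, h⟩

theorem dyckLE_antisymm {P Q : List Bool} (hlen : P.length = Q.length)
    (h₁ : dyckLE P Q) (h₂ : dyckLE Q P) : P = Q := by
  obtain ⟨R, rfl, -⟩ := exists_eq_append_of_dyckLE P (X := []) (Y := []) (R := Q)
    (by simp [hlen]) (by simpa using h₁) (by simpa using h₂)
  simpa using hlen

theorem ltOf_swap (X Y : List Bool) :
    ltOf dyckLE (X ++ false :: true :: Y) (X ++ true :: false :: Y) := by
  rw [ltOf, dyckLE_append, dyckLE_append]
  refine ⟨fun j => ?_, fun h => ?_⟩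
  · rcases j with _ | _ | j <;> simp [prefHeight_cons_succ, prefHeight_zero]
  · have := h 1
    simp [prefHeight_cons_succ, prefHeight_zero] at this

theorem replicate_append_cons (m : ℕ) (a : Bool) (w : List Bool) :
    List.replicate m a ++ a :: w = a :: (List.replicate m a ++ w) := by
  rw [← List.cons_append, ← List.replicate_succ, List.replicate_succ', List.append_assoc]
  rfl

theorem dyckLE_of_replicate_false_true {m : ℕ} {B R : List Bool}
    (h : dyckLE (List.replicate m false ++ true :: B) (true :: R)) :
    dyckLE (List.replicate m false ++ B) R := by
  intro j
  rcases le_total j m with hj | hj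
  · rw [prefHeight_replicate_false_append_of_le hj]
    exact neg_le_prefHeight R j
  · obtain ⟨t, rfl⟩ := Nat.exists_eq_add_of_le hj
    have := h (m + (t + 1))
    rw [prefHeight_replicate_false_append, ← Nat.add_assoc, prefHeight_cons_succ,
      prefHeight_cons_succ] at this
    rw [prefHeight_replicate_false_append]
    linarith

theorem eq_of_mem_left_interval (k : ℕ) (B R : List Bool) (hlen : R.length = k + 1 + B.length)
    (h₁ : dyckLE (List.replicate k false ++ true :: B) R)
    (h₂ : dyckLE R (true :: (List.replicate k false ++ B))) :
    ∃ i l, i + l = k ∧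
      R = List.replicate l false ++ true :: (List.replicate i false ++ B) := by
  induction k generalizing R with
  | zero =>
    exact ⟨0, 0, rfl, dyckLE_antisymm (by simp [hlen]; omega) h₂ h₁⟩
  | succ k ih =>
    rcases R with _ | ⟨_ | _, R⟩
    · simp at hlen
      omega
    · rw [List.replicate_succ, List.cons_append, dyckLE_cons] at h₁
      obtain ⟨i, l, rfl, rfl⟩ := ih R (by simp at hlen; omega) h₁ fun j => by
        cases j with
        | zero => simp [prefHeight_zero]
        | succ j =>
          have := h₂ (j + 1 + 1)
          simp only [List.replicate_succ, List.cons_append, prefHeight_cons_succ] at this ⊢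
          simp at this ⊢
          linarith
      exact ⟨i, l + 1, by omega, by simp [List.replicate_succ]⟩
    · rw [dyckLE_cons] at h₂
      refine ⟨k + 1, 0, rfl, ?_⟩
      rw [dyckLE_antisymm (by simp at hlen ⊢; omega) h₂ (dyckLE_of_replicate_false_true h₁)]
      rfl

theorem eq_of_mem_right_interval (k : ℕ) (B R : List Bool) (hlen : R.length = k + 1 + B.length)
    (h₁ : dyckLE (false :: (List.replicate k true ++ B)) R)
    (h₂ : dyckLE R (List.replicate k true ++ false :: B)) :
    ∃ i l, i + l = k ∧
      R = List.replicate l true ++ false :: (List.replicate i true ++ B) := by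
  obtain ⟨i, l, hil, hR⟩ := eq_of_mem_left_interval k (B.map not) (R.map not) (by simp [hlen])
    (by simpa using dyckLE_map_not h₂) (by simpa using dyckLE_map_not h₁)
  refine ⟨i, l, hil, ?_⟩
  have := congrArg (List.map not) hR
  simpa [Function.comp_def] using this

theorem IsDyckWord.of_perm_of_dyckLE {n : ℕ} {P R : List Bool} (hP : IsDyckWord n P)
    (hperm : R.Perm P) (h : dyckLE P R) : IsDyckWord n R := by
  refine ⟨(hperm.count_eq _).trans hP.1, (hperm.count_eq _).trans hP.2.1, fun p hp => ?_⟩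
  have h₁ := hP.2.2 _ (List.take_prefix p.length P)
  have h₂ := h p.length
  rw [prefHeight, prefHeight, ← List.prefix_iff_eq_take.mp hp] at h₂
  omega

theorem IsDyckWord.length_eq {n : ℕ} {P : List Bool} (hP : IsDyckWord n P) :
    P.length = n + n := by
  rw [← List.count_true_add_count_false, hP.1, hP.2.1]

/-- If the words squeezed between `W 0` and `W k` are exactly the terms of the strict chain
`W 0 < ⋯ < W k`, then this interval is linear of height `k`. -/
theorem interval_of_chain {n k : ℕ} (W : ℕ → List Bool) (hP : IsDyckWord n (W 0))
    (hperm : ∀ i ≤ k, (W i).Perm (W 0)) (hlt : ∀ i < k, ltOf dyckLE (W i) (W (i + 1)))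
    (hcl : ∀ R, R.length = (W 0).length → dyckLE (W 0) R → dyckLE R (W k) →
      ∃ i ≤ k, R = W i) :
    dyckLE (W 0) (W k) ∧ LinearInterval (DyckSet n) dyckLE (W 0) (W k) ∧
      IntervalHeight (DyckSet n) dyckLE (W 0) (W k) k := by
  have mono : ∀ i j, i ≤ j → j ≤ k → dyckLE (W i) (W j) := by
    intro i j hij
    induction j, hij using Nat.le_induction with
    | base => exact fun _ => dyckLE_refl _
    | succ j _ ih => exact fun hj => dyckLE_trans (ih (by omega)) (hlt j (by omega)).1
  have mem : ∀ i ≤ k, W i ∈ DyckSet n := fun i hi =>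
    hP.of_perm_of_dyckLE (hperm i hi) (mono 0 i (Nat.zero_le _) hi)
  have classify : ∀ R ∈ DyckSet n, dyckLE (W 0) R → dyckLE R (W k) → ∃ i ≤ k, R = W i :=
    fun R hR => hcl R ((IsDyckWord.length_eq hR).trans hP.length_eq.symm)
  have le := mono 0 k (Nat.zero_le _) le_rfl
  refine ⟨le, ⟨mem 0 (Nat.zero_le _), mem k le_rfl, le, ?_⟩,
    ⟨W, rfl, rfl, mem, hlt⟩, ?_⟩
  · intro R R' hR hR' h₁ h₂ h₃ h₄
    obtain ⟨i, hi, rfl⟩ := classify R hR h₁ h₂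
    obtain ⟨j, hj, rfl⟩ := classify R' hR' h₃ h₄
    exact (le_total i j).imp (fun h => mono i j h hj) (fun h => mono j i h hi)
  · rintro m ⟨c, hc₀, hcm, hc, hclt⟩
    have cmono : ∀ i j, i ≤ j → j ≤ m → dyckLE (c i) (c j) := by
      intro i j hij
      induction j, hij using Nat.le_induction with
      | base => exact fun _ => dyckLE_refl _
      | succ j _ ih => exact fun hj => dyckLE_trans (ih (by omega)) (hclt j (by omega)).1
    have key : ∀ i ≤ m, ∃ j, i ≤ j ∧ j ≤ k ∧ c i = W j := by
      intro i
      induction i with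
      | zero => exact fun _ => ⟨0, le_rfl, Nat.zero_le _, hc₀⟩
      | succ i ih =>
        intro hi
        obtain ⟨j, hij, hj, e⟩ := ih (by omega)
        obtain ⟨j', hj', e'⟩ := classify (c (i + 1)) (hc _ hi)
          (hc₀ ▸ cmono 0 _ (Nat.zero_le _) hi) (hcm ▸ cmono _ m hi le_rfl)
        refine ⟨j', ?_, hj', e'⟩
        by_contra hlt'
        have hn := (hclt i (by omega)).2
        rw [e, e'] at hn
        exact hn (mono j' j (by omega) hj)
    obtain ⟨j, hmj, hjk, -⟩ := key m le_rfl
    exact hmj.trans hjk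

/-- left/right intervals in the Dyck lattice are linear of height `k`. -/
theorem stmt3 (n k : ℕ) (hk : 2 ≤ k) (P Q : List Bool)
    (hP : IsDyckWord n P) (hQ : IsDyckWord n Q)
    (h : (∃ A B : List Bool,
            P = A ++ (List.replicate k false ++ true :: B) ∧
            Q = A ++ (true :: (List.replicate k false ++ B))) ∨
         (∃ A B : List Bool,
            P = A ++ (false :: (List.replicate k true ++ B)) ∧
            Q = A ++ (List.replicate k true ++ false :: B))) :
    dyckLE P Q ∧ LinearInterval (DyckSet n) dyckLE P Q ∧
      IntervalHeight (DyckSet n) dyckLE P Q k := by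
  obtain ⟨W, h0, hWk, hperm, hlt, hcl⟩ : ∃ W : ℕ → List Bool, W 0 = P ∧ W k = Q ∧
      (∀ i ≤ k, (W i).Perm P) ∧ (∀ i < k, ltOf dyckLE (W i) (W (i + 1))) ∧
      ∀ R, R.length = P.length → dyckLE P R → dyckLE R Q → ∃ i ≤ k, R = W i := by
    rcases h with ⟨A, B, rfl, rfl⟩ | ⟨A, B, rfl, rfl⟩
    · refine ⟨fun i => A ++ (List.replicate (k - i) false ++ true :: (List.replicate i false ++ B)),
        by simp, by simp, fun i hi => ?_, fun i hi => ?_, fun R hlen h₁ h₂ => ?_⟩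
      · rw [List.perm_iff_count]
        intro b
        cases b <;> simp [List.count_replicate] <;> omega
      · obtain ⟨l, rfl⟩ : ∃ l, k = i + 1 + l := ⟨k - (i + 1), by omega⟩
        have h := ltOf_swap (A ++ List.replicate l false) (List.replicate i false ++ B)
        have e : i + 1 + l - i = l + 1 := by omega
        simpa [e, List.replicate_succ, replicate_append_cons] using h
      · obtain ⟨R, rfl, h₁, h₂⟩ := exists_eq_append_of_dyckLE A hlen h₁ h₂
        obtain ⟨i, l, rfl, rfl⟩ := eq_of_mem_left_interval k B R (by simp at hlen; omega) h₁ h₂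
        exact ⟨i, by omega, by simp⟩
    · refine ⟨fun i => A ++ (List.replicate i true ++ false :: (List.replicate (k - i) true ++ B)),
        by simp, by simp, fun i hi => ?_, fun i hi => ?_, fun R hlen h₁ h₂ => ?_⟩
      · rw [List.perm_iff_count]
        intro b
        cases b <;> simp [List.count_replicate] <;> omega
      · obtain ⟨l, rfl⟩ : ∃ l, k = i + 1 + l := ⟨k - (i + 1), by omega⟩
        have h := ltOf_swap (A ++ List.replicate i true) (List.replicate l true ++ B)
        have e : i + 1 + l - i = l + 1 := by omega
        simpa [e, List.replicate_succ, replicate_append_cons] using h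
      · obtain ⟨R, rfl, h₁, h₂⟩ := exists_eq_append_of_dyckLE A hlen h₁ h₂
        obtain ⟨i, l, rfl, rfl⟩ := eq_of_mem_right_interval k B R (by simp at hlen; omega) h₁ h₂
        exact ⟨l, by omega, by simp⟩
  subst h0 hWk
  exact interval_of_chain W hP hperm hlt hcl
end

section
/- For every increment function δ of size n, every Dyck word P of size n and every up step u_i of P, the δ-excursion of u_i is well defined (i.e., some factor of P starting at u_i has δ-elevation 0), and it is a prefix of the excursion of u_i (the smallest factor of P starting at u_i that is itself a Dyck word). -/
/-- A word is the list of its letters, read off by position. -/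
theorem List.map_getD_range (w : List Bool) :
    (List.range w.length).map (fun q => w.getD q false) = w := by
  apply List.ext_getElem
  · simp
  · intro q _ hq
    simp [List.getElem?_eq_getElem hq]

/-- The number of positions of up steps is the number of up steps. -/
theorem length_filter_upSteps (w : List Bool) :
    ((List.range w.length).filter fun q => w.getD q false = true).length = w.count true := by
  conv_rhs => rw [← List.map_getD_range w]
  rw [List.count_eq_countP, List.countP_map, ← List.countP_eq_length_filter]
  congr 1

/-- `upPos w i` is a valid position of `w` and carries an up step. -/
theorem upPos_spec (w : List Bool) (i : ℕ) (hi1 : 1 ≤ i) (hi : i ≤ w.count true) :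
    upPos w i < w.length ∧ w.getD (upPos w i) false = true := by
  have hlt : i - 1 <
      ((List.range w.length).filter fun q => w.getD q false = true).length := by
    rw [length_filter_upSteps]; omega
  have hmem : upPos w i ∈
      (List.range w.length).filter fun q => w.getD q false = true := by
    unfold upPos
    rw [List.getD_eq_getElem _ _ hlt]
    exact List.getElem_mem hlt
  rw [List.mem_filter, List.mem_range] at hmem
  simpa using hmem

theorem elev_succ (δ : ℕ → ℤ) (w : List Bool) (p m : ℕ) :
    elev δ w p (p + (m + 1)) = elev δ w p (p + m) + stepVal δ w (p + m) := by
  unfold elev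
  rw [← add_assoc, Finset.sum_Ico_succ_top (by omega)]

theorem neg_one_le_stepVal {δ : ℕ → ℤ} (hδ : IsIncFun δ) (w : List Bool) (q : ℕ) :
    -1 ≤ stepVal δ w q := by
  unfold stepVal
  split_ifs
  · rcases hδ ((w.take (q + 1)).count true) with h | h <;> omega
  · exact le_rfl

/-- The δ-elevation of a factor is at most its ordinary elevation. -/
theorem elev_le {δ : ℕ → ℤ} (hδ : IsIncFun δ) (w : List Bool) (p m : ℕ)
    (hm : p + m ≤ w.length) :
    elev δ w p (p + m) ≤
      (((w.drop p).take m).count true : ℤ) - ((w.drop p).take m).count false := by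
  induction m with
  | zero => simp [elev]
  | succ m ih =>
    have hlt : p + m < w.length := by omega
    have htake : (w.drop p).take (m + 1) = (w.drop p).take m ++ [w.getD (p + m) false] := by
      rw [List.take_add_one, List.getElem?_drop, List.getElem?_eq_getElem hlt,
        List.getD_eq_getElem _ _ hlt]
      rfl
    have ih := ih (by omega)
    rw [elev_succ, htake, List.count_append, List.count_append]
    unfold stepVal
    cases w.getD (p + m) false
    · simp; omega
    · rcases hδ ((w.take (p + m + 1)).count true) with h | h <;> simp [h] <;> omega

/-- Starting from an up step, the δ-elevation vanishes before (or when) the ordinary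
elevation becomes nonpositive. -/
theorem exists_elev_eq_zero {δ : ℕ → ℤ} (hδ : IsIncFun δ) (w : List Bool) (p M : ℕ)
    (hp : w.getD p false = true) (hM : 0 < M) (hlen : p + M ≤ w.length)
    (hcount : ((w.drop p).take M).count true ≤ ((w.drop p).take M).count false) :
    ∃ m, 0 < m ∧ m ≤ M ∧ elev δ w p (p + m) = 0 := by
  classical
  have hex : ∃ m, 0 < m ∧ elev δ w p (p + m) ≤ 0 :=
    ⟨M, hM, by have := elev_le hδ w p M hlen; omega⟩
  obtain ⟨hpos, hle⟩ := Nat.find_spec hex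
  have hleM : Nat.find hex ≤ M :=
    Nat.find_min' hex ⟨hM, by have := elev_le hδ w p M hlen; omega⟩
  refine ⟨Nat.find hex, hpos, hleM, le_antisymm hle ?_⟩
  obtain ⟨k, hk⟩ : ∃ k, Nat.find hex = k + 1 := ⟨Nat.find hex - 1, by omega⟩
  rw [hk, elev_succ]
  rcases Nat.eq_zero_or_pos k with rfl | hkpos
  · have h0 : 0 ≤ stepVal δ w p := by
      unfold stepVal
      rw [if_pos hp]
      rcases hδ ((w.take (p + 1)).count true) with h | h <;> omega
    simpa [elev] using h0
  · have hmin : ¬ (0 < k ∧ elev δ w p (p + k) ≤ 0) := Nat.find_min hex (by omega)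
    have := neg_one_le_stepVal hδ w (p + k)
    have : 0 < elev δ w p (p + k) := by
      by_contra h
      exact hmin ⟨hkpos, by omega⟩
    omega

/-- the δ-excursion of any up step `u_i` of a Dyck word is well defined,
and is a prefix of the excursion of `u_i`. -/
theorem stmt5 (n : ℕ) (δ : ℕ → ℤ) (hδ : IsIncFun δ) (P : List Bool)
    (hP : IsDyckWord n P) (i : ℕ) (hi1 : 1 ≤ i) (hin : i ≤ n) :
    ∃ C : List Bool, IsDeltaExcAt δ P (upPos P i) C ∧
      ∀ E : List Bool, IsExcursionAt P (upPos P i) E → C <+: E := by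
  classical
  obtain ⟨htrue, hfalse, hpref⟩ := hP
  obtain ⟨hlt, hup⟩ := upPos_spec P i hi1 (by omega)
  set p := upPos P i
  have hsuffix : ((P.drop p).take (P.length - p)).count true ≤
      ((P.drop p).take (P.length - p)).count false := by
    rw [List.take_of_length_le (by simp)]
    have hpre := hpref _ (List.take_prefix p P)
    have ht : (P.take p).count true + (P.drop p).count true = P.count true := by
      rw [← List.count_append, List.take_append_drop]
    have hf : (P.take p).count false + (P.drop p).count false = P.count false := by
      rw [← List.count_append, List.take_append_drop]
    omega
  obtain ⟨m₀, hm₀, hm₀le, hm₀zero⟩ :=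
    exists_elev_eq_zero hδ P p (P.length - p) hup (by omega) (by omega) hsuffix
  have hex : ∃ m, 0 < m ∧ elev δ P p (p + m) = 0 := ⟨m₀, hm₀, hm₀zero⟩
  obtain ⟨hpos, hzero⟩ := Nat.find_spec hex
  have hle : Nat.find hex ≤ m₀ := Nat.find_min' hex ⟨hm₀, hm₀zero⟩
  refine ⟨(P.drop p).take (Nat.find hex), ⟨hup, Nat.find hex, hpos, by omega, rfl, hzero,
    fun m' hm' hlt' h => Nat.find_min hex hlt' ⟨hm', h⟩⟩, ?_⟩
  rintro E ⟨-, M, hM, hMlen, rfl, hDyck, -⟩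
  obtain ⟨m, hm, hmM, hmzero⟩ := exists_elev_eq_zero hδ P p M hup hM hMlen hDyck.1.le
  exact List.take_prefix_take_left ((Nat.find_min' hex ⟨hm, hmzero⟩).trans hmM)
end

section
/- Let δ be an increment function of size n and P a Dyck word of size n such that the up step u_j lies in the δ-excursion of the up step u_i. Then for every Q with P ≤ Q in the alt-Tamari poset Tam^δ_n, the up step u_j lies in the δ-excursion of u_i in Q. -/
/-- The number of up steps among the first `q` letters of `w`. -/
def upCount (w : List Bool) (q : ℕ) : ℕ := (w.take q).count true

/-- The δ-altitude of `w` before its letter at position `q`; words are continued by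
down steps beyond their length. -/
def altitude (δ : ℕ → ℤ) (w : List Bool) (q : ℕ) : ℤ :=
  ∑ l ∈ Finset.range (upCount w q), δ (l + 1) + upCount w q - q

/-- The letter of `w` at position `p` is the up step `u_i`. -/
def IsUpAt (w : List Bool) (i p : ℕ) : Prop :=
  upCount w p + 1 = i ∧ upCount w (p + 1) = i

theorem upCount_succ (w : List Bool) (q : ℕ) :
    upCount w (q + 1) = upCount w q + if w.getD q false = true then 1 else 0 := by
  unfold upCount
  rw [List.take_add_one, List.count_append]
  rcases h : w[q]? with _ | _ | _ <;> simp [List.getD, h]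

theorem upCount_append (v w : List Bool) (q : ℕ) :
    upCount (v ++ w) q = upCount v q + upCount w (q - v.length) := by
  simp [upCount, List.take_append]

theorem upCount_of_length_le {w : List Bool} {q : ℕ} (h : w.length ≤ q) :
    upCount w q = w.count true := by
  rw [upCount, List.take_of_length_le h]

theorem upCount_le_length (w : List Bool) (q : ℕ) : upCount w q ≤ w.length :=
  List.count_le_length.trans (List.length_take_le' q w)

theorem upCount_zero (w : List Bool) : upCount w 0 = 0 := by simp [upCount]

theorem upCount_cons_false_succ (w : List Bool) (q : ℕ) :
    upCount (false :: w) (q + 1) = upCount w q := by simp [upCount]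

theorem isUpAt_iff {w : List Bool} {i p : ℕ} :
    IsUpAt w i p ↔ upCount w p + 1 = i ∧ w.getD p false = true := by
  unfold IsUpAt
  rw [upCount_succ]
  refine and_congr_right fun hi => ?_
  by_cases h : w.getD p false = true
  · simp only [h, if_true, iff_true]; exact hi
  · rw [if_neg h]
    exact ⟨fun h' => by omega, fun h' => absurd h' h⟩

theorem length_filter_range (w : List Bool) (q : ℕ) :
    ((List.range q).filter fun r => w.getD r false = true).length = upCount w q := by
  induction q with
  | zero => simp [upCount_zero]
  | succ q ih =>
    rw [List.range_succ, List.filter_append, List.length_append, ih, upCount_succ]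
    split_ifs with h <;> simp only [List.filter_cons, List.filter_nil, h] <;> simp

theorem IsUpAt.upPos_eq {w : List Bool} {i p : ℕ} (h : IsUpAt w i p) : upPos w i = p := by
  obtain ⟨h1, h2⟩ := isUpAt_iff.1 h
  have hp : p < w.length := by
    by_contra hp
    simp [List.getD, List.getElem?_eq_none (not_lt.1 hp)] at h2
  obtain ⟨k, hk⟩ : ∃ k, w.length = p + (k + 1) := ⟨w.length - p - 1, by omega⟩
  have hi : i - 1 = ((List.range p).filter fun r => w.getD r false = true).length := by
    rw [length_filter_range]; omega
  unfold upPos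
  rw [hk, List.range_add, List.filter_append, hi, List.getD_append_right _ _ _ _ le_rfl,
    Nat.sub_self, List.range_succ_eq_map, List.map_cons, List.filter_cons]
  rw [if_pos (by simpa using h2)]
  simp

theorem exists_isUpAt {w : List Bool} {i : ℕ} (hi : 1 ≤ i) (hw : i ≤ w.count true) :
    ∃ p, IsUpAt w i p := by
  have hex : ∃ q, i ≤ upCount w q := ⟨w.length, by rwa [upCount_of_length_le le_rfl]⟩
  classical
  obtain ⟨p, hp⟩ : ∃ p, Nat.find hex = p + 1 := by
    refine Nat.exists_eq_succ_of_ne_zero fun h0 => ?_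
    have := Nat.find_spec hex
    rw [h0, upCount_zero] at this
    omega
  have h1 := Nat.find_spec hex
  have h2 := Nat.find_min hex (m := p) (by omega)
  rw [hp] at h1
  have h3 := upCount_succ w p
  refine ⟨p, ?_⟩
  unfold IsUpAt
  split_ifs at h3 <;> omega

theorem altitude_succ (δ : ℕ → ℤ) (w : List Bool) (q : ℕ) :
    altitude δ w (q + 1) = altitude δ w q + stepVal δ w q := by
  have h := upCount_succ w q
  unfold altitude stepVal
  change _ = _ + if _ then δ (upCount w (q + 1)) else -1
  split_ifs at h ⊢
  · rw [h, Finset.sum_range_succ]; push_cast; omega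
  · rw [h, add_zero]; push_cast; omega

theorem elev_eq_altitude_sub (δ : ℕ → ℤ) (w : List Bool) (p m : ℕ) :
    elev δ w p (p + m) = altitude δ w (p + m) - altitude δ w p := by
  induction m with
  | zero => simp [elev]
  | succ m ih =>
    have : elev δ w p (p + (m + 1)) = elev δ w p (p + m) + stepVal δ w (p + m) := by
      unfold elev
      rw [← add_assoc, Finset.sum_Ico_succ_top (by omega)]
    rw [this, ih, ← add_assoc, altitude_succ]
    ring

/-- Before its first return, the altitude after an up step stays above its starting value. -/
theorem altitude_lt_of_ne {δ : ℕ → ℤ} (hδ : IsIncFun δ) {w : List Bool} {p q : ℕ}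
    (hp : w.getD p false = true) (h : ∀ r, p < r → r ≤ q → altitude δ w r ≠ altitude δ w p) :
    ∀ r, p < r → r ≤ q → altitude δ w p < altitude δ w r := by
  intro r hpr
  induction r, hpr using Nat.le_induction with
  | base =>
    intro hq
    have h1 := h (p + 1) (by omega) hq
    rw [altitude_succ, stepVal, if_pos hp] at h1 ⊢
    rcases hδ ((w.take (p + 1)).count true) with h2 | h2 <;> rw [h2] at h1 ⊢ <;> omega
  | succ r hpr ih =>
    intro hq
    have h1 := h (r + 1) (by omega) hq
    have h2 := ih (by omega)
    have h3 : -1 ≤ stepVal δ w r := by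
      unfold stepVal
      split_ifs
      · rcases hδ ((w.take (r + 1)).count true) with h | h <;> rw [h] <;> norm_num
      · exact le_rfl
    rw [altitude_succ] at h1 ⊢
    omega

theorem altitude_le {δ : ℕ → ℤ} (hδ : IsIncFun δ) (w : List Bool) (q : ℕ) :
    altitude δ w q ≤ 2 * w.length - q := by
  have h1 := upCount_le_length w q
  have h2 : ∑ l ∈ Finset.range (upCount w q), δ (l + 1) ≤ upCount w q := by
    refine (Finset.sum_le_card_nsmul _ _ 1 fun l _ => ?_).trans (by simp)
    rcases hδ (l + 1) with h | h <;> rw [h]; norm_num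
  unfold altitude
  omega

theorem exists_altitude_eq {δ : ℕ → ℤ} (hδ : IsIncFun δ) {w : List Bool} {p : ℕ}
    (hp : w.getD p false = true) :
    ∃ m, 0 < m ∧ altitude δ w (p + m) = altitude δ w p := by
  by_contra! hne
  obtain ⟨r, hr⟩ : ∃ r : ℕ, 2 * w.length - altitude δ w p ≤ r := ⟨_, Int.self_le_toNat _⟩
  have h1 := altitude_lt_of_ne hδ hp (q := p + r + 1)
    (fun s hs _ => by
      obtain ⟨m, rfl⟩ := Nat.exists_eq_add_of_lt hs
      exact hne (m + 1) (by omega)) (p + r + 1) (by omega) le_rfl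
  have h2 := altitude_le hδ w (p + r + 1)
  push_cast at h2
  omega

/-- `u_j` lies in the δ-excursion of `u_i` exactly when the altitude stays above that of `u_i`
up to `u_j`. -/
theorem lt_add_excLen_iff {δ : ℕ → ℤ} (hδ : IsIncFun δ) {w : List Bool} {i p q : ℕ}
    (hp : IsUpAt w i p) :
    q < p + excLen δ w i ↔ ∀ r, p < r → r ≤ q → altitude δ w p < altitude δ w r := by
  have hup := (isUpAt_iff.1 hp).2
  simp only [excLen, hp.upPos_eq, elev_eq_altitude_sub, sub_eq_zero]
  constructor
  · intro h
    refine altitude_lt_of_ne hδ hup fun r hpr hrq heq => ?_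
    obtain ⟨m, rfl⟩ := Nat.exists_eq_add_of_lt hpr
    exact Nat.notMem_of_lt_sInf (s := {m | 0 < m ∧ altitude δ w (p + m) = altitude δ w p})
      (m := m + 1) (by omega) ⟨by omega, heq⟩
  · intro h
    obtain ⟨h1, h2⟩ := Nat.sInf_mem
      (s := {m | 0 < m ∧ altitude δ w (p + m) = altitude δ w p}) (exists_altitude_eq hδ hup)
    by_contra hlt
    exact (h _ (by omega) (not_lt.1 hlt)).ne' h2

/-- How prefix counts change when a down step is moved past a factor `C`. -/
theorem upCount_moveDown (A C B : List Bool) (q : ℕ) :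
    upCount (A ++ (C ++ false :: B)) q =
      if A.length ≤ q ∧ q ≤ A.length + C.length then
        upCount (A ++ false :: (C ++ B)) (q + 1)
      else upCount (A ++ false :: (C ++ B)) q := by
  split_ifs with h
  · obtain ⟨k, rfl⟩ := Nat.exists_eq_add_of_le h.1
    have h0 : k - C.length = 0 := by omega
    simp only [upCount_append, upCount_of_length_le (Nat.le_add_right A.length k),
      upCount_of_length_le (show A.length ≤ A.length + (k + 1) by omega), add_assoc,
      Nat.add_sub_cancel_left, upCount_cons_false_succ, h0, upCount_zero]
  · rcases lt_or_ge q A.length with hq | hq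
    · have h0 : q - A.length = 0 := by omega
      simp only [upCount_append, h0, upCount_zero]
    · obtain ⟨k, rfl⟩ : ∃ k, q = A.length + (C.length + k + 1) :=
        ⟨q - A.length - C.length - 1, by omega⟩
      have h1 : C.length + k + 1 - C.length = k + 1 := by omega
      simp only [upCount_append, Nat.add_sub_cancel_left, h1, upCount_cons_false_succ,
        upCount_of_length_le (show C.length ≤ C.length + k + 1 by omega),
        upCount_of_length_le (Nat.le_add_right C.length k)]

/-- A δ-rotation preserves the relation that `u_j` lies in the δ-excursion of `u_i`. -/
theorem DeltaRot.excursion_mono {δ : ℕ → ℤ} (hδ : IsIncFun δ) {P Q : List Bool}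
    (hrot : DeltaRot δ P Q) {i j : ℕ} (hi1 : 1 ≤ i) (hi : i ≤ P.count true)
    (hj1 : 1 ≤ j) (hj : j ≤ P.count true)
    (h : upPos P i ≤ upPos P j ∧ upPos P j < upPos P i + excLen δ P i) :
    upPos Q i ≤ upPos Q j ∧ upPos Q j < upPos Q i + excLen δ Q i := by
  obtain ⟨p, hp⟩ := exists_isUpAt hi1 hi
  obtain ⟨q, hq⟩ := exists_isUpAt hj1 hj
  rw [hp.upPos_eq, hq.upPos_eq] at h
  obtain ⟨hpq, hexc⟩ := h
  rw [lt_add_excLen_iff hδ hp] at hexc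
  obtain ⟨A, C, B, hPeq, hQeq, hup, m, hm, hlen, hC, hret, hfirst⟩ := hrot
  have hCm : C.length = m := by
    rw [hC, List.length_take, List.length_drop]; omega
  set a := A.length with ha
  have hU : ∀ r, upCount Q r =
      if a ≤ r ∧ r ≤ a + m then upCount P (r + 1) else upCount P r := by
    intro r
    rw [hPeq, hQeq, upCount_moveDown, hCm]
  have hvalley : upCount P (a + 1) = upCount P a := by
    have h0 : P.getD a false = false := by simp [hPeq, ha]
    rw [upCount_succ, h0]
    simp
  have hH : ∀ r, altitude δ Q r =
      if a ≤ r ∧ r ≤ a + m then altitude δ P (r + 1) + 1 else altitude δ P r := by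
    intro r
    unfold altitude
    rw [hU]
    split_ifs
    · push_cast; omega
    · rfl
  rw [elev_eq_altitude_sub] at hret
  have habove := altitude_lt_of_ne hδ hup (q := a + m) fun r hr hrm heq => by
    obtain ⟨k, rfl⟩ := Nat.exists_eq_add_of_lt hr
    refine hfirst (k + 1) (by omega) (by omega) ?_
    rw [elev_eq_altitude_sub]
    exact sub_eq_zero.2 heq
  have hshift : ∀ {k s}, IsUpAt P k s →
      IsUpAt Q k (if a < s ∧ s ≤ a + m then s - 1 else s) := by
    rintro k s ⟨h1, h2⟩
    have hsa : s ≠ a := by rintro rfl; omega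
    unfold IsUpAt
    split_ifs with hs
    · obtain ⟨t, rfl⟩ : ∃ t, s = t + 1 := ⟨s - 1, by omega⟩
      rw [Nat.add_sub_cancel, hU, hU, if_pos (by omega), if_pos (by omega)]
      exact ⟨h1, h2⟩
    · rw [hU, hU, if_neg (by omega)]
      refine ⟨h1, ?_⟩
      split_ifs with hs'
      · rw [show s + 1 = a by omega] at h2 ⊢
        omega
      · exact h2
  have hpa : p ≠ a := by rintro rfl; have := hp.1; have := hp.2; omega
  have hqa : q ≠ a := by rintro rfl; have := hq.1; have := hq.2; omega
  have hp' := hshift hp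
  have hq' := hshift hq
  have hpq' : (if a < p ∧ p ≤ a + m then p - 1 else p) ≤
      if a < q ∧ q ≤ a + m then q - 1 else q := by
    split_ifs <;> omega
  rw [hp'.upPos_eq, hq'.upPos_eq]
  refine ⟨hpq', (lt_add_excLen_iff hδ hp').2 fun r hpr hrq => ?_⟩
  have hr : (a ≤ r ∧ r ≤ a + m) → r + 1 ≤ q := by
    intro hr; split_ifs at hrq <;> omega
  have hrq' : r ≤ q := by split_ifs at hrq <;> omega
  clear hshift hp' hq' hpq'
  by_cases hpin : a < p ∧ p ≤ a + m
  · rw [if_pos hpin] at hpr ⊢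
    rw [hH, hH, if_pos (show a ≤ p - 1 ∧ p - 1 ≤ a + m by omega),
      show p - 1 + 1 = p by omega]
    split_ifs with hrin
    · have := hexc (r + 1) (by omega) (hr hrin)
      omega
    · have h1 := hexc (a + 1 + m) (by omega) (by omega)
      rcases eq_or_ne p (a + 1) with rfl | hne
      · omega
      · have := habove p (by omega) hpin.2
        omega
  · rw [if_neg hpin] at hpr ⊢
    rw [hH, hH, if_neg (show ¬(a ≤ p ∧ p ≤ a + m) by omega)]
    split_ifs with hrin
    · have := hexc (r + 1) (by omega) (hr hrin)
      omega
    · exact hexc r hpr hrq'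

theorem DeltaRot.count_true_eq {δ : ℕ → ℤ} {P Q : List Bool} (h : DeltaRot δ P Q) :
    Q.count true = P.count true := by
  obtain ⟨A, C, B, rfl, rfl, -⟩ := h
  simp

/-- if `u_j` lies in the δ-excursion of `u_i` in `P`, then this remains
true in every `Q ≥ P` in the alt-Tamari poset. -/
theorem stmt10 (n : ℕ) (δ : ℕ → ℤ) (hδ : IsIncFun δ) (P : List Bool)
    (hP : IsDyckWord n P) (i j : ℕ) (hi1 : 1 ≤ i) (hin : i ≤ n)
    (hj1 : 1 ≤ j) (hjn : j ≤ n)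
    (h : upPos P i ≤ upPos P j ∧ upPos P j < upPos P i + excLen δ P i) :
    ∀ Q : List Bool, altLE δ P Q →
      upPos Q i ≤ upPos Q j ∧ upPos Q j < upPos Q i + excLen δ Q i := by
  intro Q hPQ
  suffices hQ : Q.count true = n ∧
      upPos Q i ≤ upPos Q j ∧ upPos Q j < upPos Q i + excLen δ Q i from hQ.2
  induction hPQ with
  | refl => exact ⟨hP.1, h⟩
  | tail _ hrot ih =>
    obtain ⟨hn, hR⟩ := ih
    exact ⟨hrot.count_true_eq.trans hn,
      hrot.excursion_mono hδ hi1 (hn ▸ hin) hj1 (hn ▸ hjn) hR⟩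
end

section
/- Let δ and δ' be increment functions of size n with δ(i) ≤ δ'(i) for all i, and let P be a Dyck word of size n. Then for every up step u_i of P, the δ-excursion of u_i in P is a prefix of the δ'-excursion of u_i in P. -/
theorem elev_mono {δ δ' : ℕ → ℤ} (hle : ∀ i, δ i ≤ δ' i) (w : List Bool) (a b : ℕ) :
    elev δ w a b ≤ elev δ' w a b := by
  refine Finset.sum_le_sum fun q _ => ?_
  unfold stepVal
  split_ifs
  · exact hle _
  · exact le_rfl

theorem elev_add_succ (δ : ℕ → ℤ) (w : List Bool) (p k : ℕ) :
    elev δ w p (p + (k + 1)) = elev δ w p (p + k) + stepVal δ w (p + k) :=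
  Finset.sum_Ico_succ_top (Nat.le_add_right p k) _

/-- The elevation starts nonnegative at an up step and decreases by at most one per letter,
so it stays positive until it first vanishes. -/
theorem elev_pos_of_forall_ne_zero {δ : ℕ → ℤ} (hδ : IsIncFun δ) {w : List Bool} {p m : ℕ}
    (hp : w.getD p false = true)
    (hne : ∀ k, 0 < k → k < m → elev δ w p (p + k) ≠ 0) {k : ℕ} (hk : 0 < k) (hkm : k < m) :
    0 < elev δ w p (p + k) := by
  induction k, hk using Nat.le_induction with
  | base =>
    change 0 < elev δ w p (p + 1)
    have hne_one := hne 1 one_pos hkm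
    have helev : elev δ w p (p + 1) = δ ((w.take (p + 1)).count true) := by
      rw [elev, Nat.Ico_succ_singleton, Finset.sum_singleton, stepVal, if_pos hp]
    rcases hδ ((w.take (p + 1)).count true) with h | h <;> omega
  | succ k hk ih =>
    have hpos := ih (by omega)
    have hne_succ := hne (k + 1) (by omega) hkm
    have hstep := neg_one_le_stepVal hδ w (p + k)
    have hsucc := elev_add_succ δ w p k
    omega

/-- if `δ ≤ δ'` pointwise, then every δ-excursion is a prefix of the
corresponding δ'-excursion. -/
theorem stmt12 (n : ℕ) (δ δ' : ℕ → ℤ) (hδ : IsIncFun δ) (hδ' : IsIncFun δ')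
    (hle : ∀ i, δ i ≤ δ' i) (P : List Bool) (hP : IsDyckWord n P)
    (i : ℕ) (hi1 : 1 ≤ i) (hin : i ≤ n) (C C' : List Bool)
    (hC : IsDeltaExcAt δ P (upPos P i) C)
    (hC' : IsDeltaExcAt δ' P (upPos P i) C') :
    C <+: C' := by
  obtain ⟨hp, m, -, -, rfl, -, hne⟩ := hC
  obtain ⟨-, m', hm', -, rfl, hzero, -⟩ := hC'
  refine List.take_prefix_take_left ?_
  by_contra! hlt
  have hpos := elev_pos_of_forall_ne_zero hδ hp hne hm' hlt
  have hmono := elev_mono hle P (upPos P i) (upPos P i + m')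
  omega
end

section
/- Let δ and δ' be increment functions of size n with δ(i) ≤ δ'(i) for all i. Then the alt-Tamari poset Tam^δ_n refines Tam^{δ'}_n: for all Dyck words P, Q of size n, if P ≤ Q in Tam^{δ'}_n then P ≤ Q in Tam^δ_n; in particular, if Q covers P in Tam^{δ'}_n then P < Q in Tam^δ_n. -/
/-- The δ-elevation of a word whose first up step is numbered `k + 1`. -/
def wordElev (δ : ℕ → ℤ) : ℕ → List Bool → ℤ
  | _, [] => 0
  | k, true :: w => δ (k + 1) + wordElev δ (k + 1) w
  | k, false :: w => -1 + wordElev δ k w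

theorem wordElev_append (δ : ℕ → ℤ) (X Y : List Bool) (k : ℕ) :
    wordElev δ k (X ++ Y) = wordElev δ k X + wordElev δ (k + X.count true) Y := by
  induction X generalizing k with
  | nil => simp [wordElev]
  | cons c X ih =>
    cases c
    · simp [wordElev, ih, add_assoc]
    · simp [wordElev, ih, add_assoc, add_comm 1]

theorem wordElev_mono {δ δ' : ℕ → ℤ} (hle : ∀ i, δ i ≤ δ' i) (X : List Bool) (k : ℕ) :
    wordElev δ k X ≤ wordElev δ' k X := by
  induction X generalizing k with
  | nil => simp [wordElev]
  | cons c X ih =>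
    cases c
    · simpa [wordElev] using ih k
    · simpa [wordElev] using add_le_add (hle (k + 1)) (ih (k + 1))

theorem elev_append (δ : ℕ → ℤ) (Y X Z : List Bool) :
    elev δ (X ++ (Y ++ Z)) X.length (X.length + Y.length) = wordElev δ (X.count true) Y := by
  induction Y generalizing X with
  | nil => simp [elev, wordElev]
  | cons c Y ih =>
    have h := ih (X ++ [c])
    simp only [List.append_assoc, List.singleton_append, List.length_append,
      List.length_singleton, elev] at h
    rw [elev, List.length_cons, Finset.sum_eq_sum_Ico_succ_bot (by omega),
      show X.length + (Y.length + 1) = X.length + 1 + Y.length by omega, List.cons_append, h]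
    cases c <;> simp [stepVal, wordElev, List.take_append, List.take_of_length_le]

/-- A path from a positive height to a nonpositive one with down steps of size one
has a first passage through `0`. -/
theorem exists_first_passage {δ : ℕ → ℤ} (hδ : IsIncFun δ) (C : List Bool) (k : ℕ) (h : ℤ)
    (hh : 0 < h) (hC : h + wordElev δ k C ≤ 0) :
    ∃ X Y, C = X ++ Y ∧ h + wordElev δ k X = 0 ∧
      ∀ X' Y', X = X' ++ Y' → Y' ≠ [] → 0 < h + wordElev δ k X' := by
  induction C generalizing k h with
  | nil => simp [wordElev] at hC; omega
  | cons c C ih =>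
    obtain ⟨k', v, hv, hcons⟩ : ∃ k' v, -1 ≤ v ∧
        ∀ W, wordElev δ k (c :: W) = v + wordElev δ k' W := by
      cases c
      · exact ⟨k, -1, le_rfl, fun W => rfl⟩
      · exact ⟨k + 1, δ (k + 1), by rcases hδ (k + 1) with h | h <;> omega, fun W => rfl⟩
    rcases (by omega : h + v = 0 ∨ 0 < h + v) with h0 | hpos
    · refine ⟨[c], C, rfl, by rw [hcons]; simpa [wordElev] using h0, ?_⟩
      intro X' Y' hX hY
      rcases X' with _ | ⟨a, X'⟩
      · simpa [wordElev] using hh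
      · simp_all
    · obtain ⟨X, Y, rfl, hX0, hX⟩ := ih k' (h + v) hpos (by rw [hcons] at hC; omega)
      refine ⟨c :: X, Y, rfl, by rw [hcons]; omega, ?_⟩
      intro X' Y' hX' hY'
      rcases X' with _ | ⟨a, X'⟩
      · simpa [wordElev] using hh
      · rw [List.cons_append, List.cons.injEq] at hX'
        obtain ⟨rfl, hX'⟩ := hX'
        have := hX X' Y' hX' hY'
        rw [hcons]
        omega

/-- An up step from which the path reaches a nonpositive δ-elevation has a δ-excursion. -/
theorem exists_excursion_prefix {δ : ℕ → ℤ} (hδ : IsIncFun δ) (C : List Bool) (k : ℕ)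
    (hC : wordElev δ k (true :: C) ≤ 0) :
    ∃ X Y, C = X ++ Y ∧ wordElev δ k (true :: X) = 0 ∧
      ∀ X' Y', true :: X = X' ++ Y' → X' ≠ [] → Y' ≠ [] → wordElev δ k X' ≠ 0 := by
  rcases hδ (k + 1) with h0 | h1
  · refine ⟨[], C, rfl, by simp [wordElev, h0], ?_⟩
    intro X' Y' h hX hY
    rcases X' with _ | ⟨a, X'⟩ <;> simp_all
  · obtain ⟨X, Y, rfl, hX0, hX⟩ := exists_first_passage hδ C (k + 1) 1 one_pos
      (by simpa [wordElev, h1] using hC)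
    refine ⟨X, Y, rfl, by simpa [wordElev, h1] using hX0, ?_⟩
    intro X' Y' h hX' hY'
    rcases X' with _ | ⟨a, X'⟩
    · simp at hX'
    · rw [List.cons_append, List.cons.injEq] at h
      obtain ⟨rfl, h⟩ := h
      have := hX X' Y' h hY'
      simp only [wordElev, h1]
      omega

/-- Characterization of δ-excursions through decompositions of words. -/
theorem isDeltaExcAt_append_iff (δ : ℕ → ℤ) (X C B : List Bool) :
    IsDeltaExcAt δ (X ++ (C ++ B)) X.length C ↔
      C.head? = some true ∧ wordElev δ (X.count true) C = 0 ∧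
        ∀ U V, C = U ++ V → U ≠ [] → V ≠ [] → wordElev δ (X.count true) U ≠ 0 := by
  constructor
  · rintro ⟨hup, m, hm, hmlen, hC, h0, hmin⟩
    have hCm : C.length = m := by
      have := congrArg List.length hC
      simp only [List.length_append] at hmlen
      simp at this
      omega
    subst hCm
    rw [elev_append] at h0
    refine ⟨?_, h0, ?_⟩
    · rcases C with _ | ⟨c, C⟩
      · simp at hm
      · simpa using hup
    · rintro U V rfl hU hV
      have := hmin U.length (List.length_pos_iff.2 hU)
        (by have := List.length_pos_iff.2 hV; simp; omega)
      rwa [List.append_assoc, elev_append] at this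
  · rintro ⟨hhead, h0, hmin⟩
    obtain ⟨C, rfl⟩ : ∃ D, C = true :: D := by
      rcases C with _ | ⟨c, C⟩ <;> simp_all
    refine ⟨by simp, (true :: C).length, by simp, by simp, by simp, ?_, ?_⟩
    · rw [elev_append, h0]
    · intro m hm hmlt
      have hsplit := (List.take_append_drop m (true :: C)).symm
      have := hmin _ _ hsplit (by simp; omega)
        (by rw [← List.length_pos_iff, List.length_drop]; omega)
      rw [← elev_append δ _ X (List.drop m (true :: C) ++ B), ← List.append_assoc (List.take _ _),
        ← hsplit, List.length_take, min_eq_left hmlt.le] at this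
      exact this

/-- A down step can be moved past any factor all of whose suffixes have nonpositive
δ-elevation. -/
theorem altLE_of_suffix_nonpos {δ : ℕ → ℤ} (hδ : IsIncFun δ) (A C B : List Bool)
    (hC : ∀ X Y, C = X ++ Y → wordElev δ (A.count true + X.count true) Y ≤ 0) :
    altLE δ (A ++ false :: (C ++ B)) (A ++ (C ++ false :: B)) := by
  induction hn : C.length using Nat.strong_induction_on generalizing A C with
  | _ n ih =>
    rcases C with _ | ⟨_ | _, C⟩
    · exact Relation.ReflTransGen.refl
    · have := ih C.length (by simp at hn; omega) (A ++ [false]) C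
        (fun X Y h => by simpa using hC (false :: X) Y (by simp [h])) rfl
      simpa using this
    · obtain ⟨X, Y, rfl, hX0, hX⟩ := exists_excursion_prefix hδ C (A.count true)
        (by simpa using hC [] _ rfl)
      have hrot : DeltaRot δ (A ++ false :: (true :: (X ++ Y) ++ B))
          (A ++ (true :: X ++ false :: (Y ++ B))) := by
        refine ⟨A, true :: X, Y ++ B, by simp, rfl, ?_⟩
        have := (isDeltaExcAt_append_iff δ (A ++ [false]) (true :: X) (Y ++ B)).2
          ⟨rfl, by simpa using hX0, by simpa using hX⟩
        simpa using this
      have := ih Y.length (by simp at hn; omega) (A ++ true :: X) Y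
        (fun U V h => by
          have := hC (true :: X ++ U) V (by simp [h])
          rw [List.count_append, ← add_assoc] at this
          simpa only [List.count_append] using this) rfl
      refine Relation.ReflTransGen.head hrot ?_
      simpa [altLE] using this

/-- Every suffix of a δ-excursion has nonpositive δ-elevation. -/
theorem wordElev_suffix_nonpos {δ : ℕ → ℤ} (hδ : IsIncFun δ) {k : ℕ} {C X Y : List Bool}
    (hhead : C.head? = some true) (h0 : wordElev δ k C = 0)
    (hmin : ∀ U V, C = U ++ V → U ≠ [] → V ≠ [] → wordElev δ k U ≠ 0) (hC : C = X ++ Y) :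
    wordElev δ (k + X.count true) Y ≤ 0 := by
  subst hC
  rcases X with _ | ⟨c, X⟩
  · simpa using h0.le
  rcases eq_or_ne Y [] with rfl | hY
  · simp [wordElev]
  obtain rfl : c = true := by simpa using hhead
  rw [wordElev_append] at h0
  by_contra! hpos
  obtain ⟨U, V, rfl, hU, -⟩ := exists_excursion_prefix hδ X k (by omega)
  exact hmin (true :: U) (V ++ Y) (by simp) (by simp) (by simp [hY]) hU

theorem DeltaRot.altLE_of_le {δ δ' : ℕ → ℤ} (hδ : IsIncFun δ) (hδ' : IsIncFun δ')
    (hle : ∀ i, δ i ≤ δ' i) {P Q : List Bool} (h : DeltaRot δ' P Q) : altLE δ P Q := by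
  obtain ⟨A, C, B, rfl, rfl, hexc⟩ := h
  have hexc' : IsDeltaExcAt δ' ((A ++ [false]) ++ (C ++ B)) (A ++ [false]).length C := by
    simpa using hexc
  obtain ⟨hhead, h0, hmin⟩ := (isDeltaExcAt_append_iff ..).1 hexc'
  refine altLE_of_suffix_nonpos hδ A C B fun X Y h => (wordElev_mono hle _ _).trans ?_
  simpa using wordElev_suffix_nonpos hδ' hhead h0 hmin h

/-- Rotations increase words lexicographically. -/
theorem DeltaRot.lt {δ : ℕ → ℤ} {P Q : List Bool} (h : DeltaRot δ P Q) : P < Q := by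
  obtain ⟨A, C, B, rfl, rfl, hexc⟩ := h
  have hexc' : IsDeltaExcAt δ ((A ++ [false]) ++ (C ++ B)) (A ++ [false]).length C := by
    simpa using hexc
  obtain ⟨hhead, -⟩ := (isDeltaExcAt_append_iff ..).1 hexc'
  rcases C with _ | ⟨c, C⟩
  · simp at hhead
  · obtain rfl : c = true := by simpa using hhead
    exact List.Lex.append_left _ (List.Lex.rel (by decide)) A

theorem altLE.le {δ : ℕ → ℤ} {P Q : List Bool} (h : altLE δ P Q) : P ≤ Q := by
  induction h with
  | refl => exact le_rfl
  | tail _ hrot ih => exact ih.trans hrot.lt.le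

/-- if `δ ≤ δ'` pointwise, then `Tam^δ_n` refines `Tam^{δ'}_n`; in
particular any covering relation of `Tam^{δ'}_n` is a strict relation of `Tam^δ_n`. -/
theorem stmt13 (n : ℕ) (δ δ' : ℕ → ℤ) (hδ : IsIncFun δ) (hδ' : IsIncFun δ')
    (hle : ∀ i, δ i ≤ δ' i) :
    (∀ P Q : List Bool, IsDyckWord n P → IsDyckWord n Q →
      altLE δ' P Q → altLE δ P Q) ∧
    (∀ P Q : List Bool, IsDyckWord n P → IsDyckWord n Q →
      CovIn (DyckSet n) (altLE δ') P Q → ltOf (altLE δ) P Q) := by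
  have hrefine : ∀ P Q, altLE δ' P Q → altLE δ P Q := fun P Q h => by
    induction h with
    | refl => exact Relation.ReflTransGen.refl
    | tail _ hrot ih => exact ih.trans (hrot.altLE_of_le hδ hδ' hle)
  refine ⟨fun P Q _ _ h => hrefine P Q h, fun P Q _ _ hcov => ?_⟩
  obtain ⟨-, -, ⟨hPQ, hQP⟩, -⟩ := hcov
  have hPQ' := hrefine P Q hPQ
  refine ⟨hPQ', fun hQP' => hQP ?_⟩
  rw [le_antisymm hQP'.le hPQ'.le]
  exact Relation.ReflTransGen.refl
end
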